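/- arXiv:1507.04070 — 2 statements merged into one kernel-verified Lean document; each statement's English description precedes it below -/
import Mathlib

section
/- Let B be a set of Wang tiles with two symbols {0,1}, and let R be the tile with (b,l,t,r) = (0,0,1,1). Suppose every tile B ∈ B with B ≠ R satisfies (b(B), t(B)) ∈ {(0,0),(1,0),(1,1)} and (r(B), l(B)) ∈ {(0,0),(1,0),(1,1)}. Then the spatial entropy h(B) = 0. -/
/-!
Colour an edge by an integer in `{0, 1}`. The tile hypothesis implies that every tile
`(b, l, t, r)` of `B` satisfies

* `|r - l| ≤ r - l`, and
* `|t - b| ≤ 2 (r - l) - (t - b)`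

(`tile_ineq`): vertical edge colours never decrease from left to right, and horizontal edge colours
increase upwards only across the tile `R`, where `r - l = 1`. Summing over all squares of an
`(M+1) × (N+1)` lattice, the right-hand sides telescope, so the number of squares across which a
colour changes, counted in both directions, is at most `3 N + M` (`card_changes_le`), although
there are `2 M N` possible places for a change. A colouring is determined by its changes together
with the `M + N` edges of the bottom and left sides (`changes_injective`).

The number of subsets of size at most `s` of a `K`-element set is at most `(1 + x)^K / x^s` for
every `0 < x ≤ 1` (`card_small_mul_pow_le`). Hence
`log Γ ≤ (M + N) log 2 + (3 N + M) log (1 / x) + 2 M N x`; after division by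
`(M + 1) (N + 1)` the limit superior is at most `2 x`, and `x` is arbitrary. The bound is uniform
enough for `m` and `n` to go to infinity independently, which a bound such as
`(m + n) log (m + n)` for `log Γ` would not be.
-/

open Filter

/-- A symbol (color) for two-symbol Wang tiles. -/
abbrev Col : Type := Fin 2

/-- A Wang tile `(b, l, t, r)`: colors of the bottom, left, top and right edges. -/
abbrev WTile : Type := Col × Col × Col × Col

def WTile.b (T : WTile) : Col := T.1
def WTile.l (T : WTile) : Col := T.2.1
def WTile.t (T : WTile) : Col := T.2.2.1
def WTile.r (T : WTile) : Col := T.2.2.2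

/-- An edge coloring of the `m × n` rectangular lattice `Z_{m×n}`:
colors of the horizontal edges (indexed by their left endpoint `(i,j)`,
`0 ≤ i ≤ m-2`, `0 ≤ j ≤ n-1`) and of the vertical edges (indexed by their
bottom endpoint `(i,j)`, `0 ≤ i ≤ m-1`, `0 ≤ j ≤ n-2`). -/
def Coloring (m n : ℕ) : Type :=
  (Fin (m - 1) × Fin n → Col) × (Fin m × Fin (n - 1) → Col)

/-- The Wang tile `(b,l,t,r)` carried by the unit square with bottom-left corner `(i,j)`. -/
def Coloring.square {m n : ℕ} (c : Coloring m n) (i : Fin (m - 1)) (j : Fin (n - 1)) :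
    WTile :=
  (c.1 (i, ⟨j.1, by have := j.2; omega⟩),
   c.2 (⟨i.1, by have := i.2; omega⟩, j),
   c.1 (i, ⟨j.1 + 1, by have := j.2; omega⟩),
   c.2 (⟨i.1 + 1, by have := i.2; omega⟩, j))

/-- A coloring is `B`-admissible if every unit square carries a tile of `B`. -/
def Admissible (B : Finset WTile) {m n : ℕ} (c : Coloring m n) : Prop :=
  ∀ i j, c.square i j ∈ B

/-- `Γ_{m×n}(B)`: the number of `B`-admissible edge colorings of the `m × n` lattice. -/
noncomputable def Gamma (B : Finset WTile) (m n : ℕ) : ℕ :=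
  Nat.card {c : Coloring m n // Admissible B c}

/-- The spatial entropy `h(B) = lim_{m,n→∞} log Γ_{m×n}(B) / (mn)`. -/
noncomputable def entropy (B : Finset WTile) : ℝ :=
  limsup (fun p : ℕ × ℕ => Real.log (Gamma B p.1 p.2) / (p.1 * p.2)) (atTop ×ˢ atTop)

section Aux

/-- The integer value of a colour, so that differences of colours telescope. -/
def colZ (a : Col) : ℤ := (a.1 : ℤ)

lemma colZ_nonneg (a : Col) : 0 ≤ colZ a := by unfold colZ; positivity

lemma colZ_le_one (a : Col) : colZ a ≤ 1 := by unfold colZ; omega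

/-- The tile hypothesis as two linear inequalities bounding the change of colour across a tile;
both right-hand sides telescope when summed over the lattice. -/
lemma tile_ineq (b l t r : Col)
    (h : (b, l, t, r) ≠ (((0 : Col), (0 : Col), (1 : Col), (1 : Col)) : WTile) →
      (b, t) ∈ ({((0 : Col), (0 : Col)), (1, 0), (1, 1)} : Set (Col × Col)) ∧
      (r, l) ∈ ({((0 : Col), (0 : Col)), (1, 0), (1, 1)} : Set (Col × Col))) :
    (if l ≠ r then (1 : ℤ) else 0) ≤ colZ r - colZ l ∧
    (if b ≠ t then (1 : ℤ) else 0) ≤ 2 * (colZ r - colZ l) - (colZ t - colZ b) := by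
  simp only [Set.mem_insert_iff, Set.mem_singleton_iff] at h
  revert b l t r
  unfold colZ
  decide

lemma sum_fin_telescope {N : ℕ} (f : Fin (N + 1) → ℤ) :
    ∑ i : Fin N, (f i.succ - f i.castSucc) = f (Fin.last N) - f 0 := by
  have h1 := Fin.sum_univ_succ f
  have h2 := Fin.sum_univ_castSucc f
  rw [Finset.sum_sub_distrib]
  linarith

variable {M N : ℕ}

/-- The places of an `(M+1) × (N+1)` lattice where a colour can change: for each unit square,
`Sum.inl` stands for the step from its bottom edge to its top edge, `Sum.inr` for the step from its
left edge to its right edge. -/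
abbrev Place (M N : ℕ) : Type := (Fin M × Fin N) ⊕ (Fin M × Fin N)

/-- Colour of the horizontal edge at column `i` and height `j`. -/
def hor (c : Coloring (M + 1) (N + 1)) (i : Fin M) (j : Fin (N + 1)) : Col := c.1 (i, j)

/-- Colour of the vertical edge at abscissa `i` in row `j`. -/
def ver (c : Coloring (M + 1) (N + 1)) (i : Fin (M + 1)) (j : Fin N) : Col := c.2 (i, j)

/-- The set of places where the colouring `c` changes colour. -/
def changes (c : Coloring (M + 1) (N + 1)) : Finset (Place M N) :=
  (Finset.univ.filter fun p : Fin M × Fin N => hor c p.1 p.2.castSucc ≠ hor c p.1 p.2.succ).disjSum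
    (Finset.univ.filter fun p : Fin M × Fin N => ver c p.1.castSucc p.2 ≠ ver c p.1.succ p.2)

lemma card_changes (c : Coloring (M + 1) (N + 1)) :
    ((changes c).card : ℤ) =
      (∑ i : Fin M, ∑ j : Fin N, if hor c i j.castSucc ≠ hor c i j.succ then (1 : ℤ) else 0) +
      ∑ i : Fin M, ∑ j : Fin N, if ver c i.castSucc j ≠ ver c i.succ j then (1 : ℤ) else 0 := by
  rw [changes, Finset.card_disjSum, Finset.card_filter, Finset.card_filter,
    Fintype.sum_prod_type, Fintype.sum_prod_type]
  push_cast
  rfl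

/-- In an admissible colouring each of the `N` rows contributes at most `3` and each of the `M` columns
at most `1` to the telescoped sum of both bounds in `tile_ineq`. -/
lemma card_changes_le (B : Finset WTile)
    (hB : ∀ T ∈ B, T ≠ (((0 : Col), (0 : Col), (1 : Col), (1 : Col)) : WTile) →
      (T.b, T.t) ∈ ({((0 : Col), (0 : Col)), (1, 0), (1, 1)} : Set (Col × Col)) ∧
      (T.r, T.l) ∈ ({((0 : Col), (0 : Col)), (1, 0), (1, 1)} : Set (Col × Col)))
    (c : Coloring (M + 1) (N + 1)) (hc : Admissible B c) :
    (changes c).card ≤ 3 * N + M := by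
  have key : ∀ (i : Fin M) (j : Fin N), _ :=
    fun i j => tile_ineq (hor c i j.castSucc) (ver c i.castSucc j) (hor c i j.succ)
      (ver c i.succ j) (hB _ (hc i j))
  have hV : ∑ i : Fin M, ∑ j : Fin N, (colZ (ver c i.succ j) - colZ (ver c i.castSucc j)) ≤ N := by
    rw [Finset.sum_comm]
    calc _ ≤ ∑ _j : Fin N, (1 : ℤ) := Finset.sum_le_sum fun j _ => by
          have := sum_fin_telescope (fun i : Fin (M + 1) => colZ (ver c i j))
          have h1 := colZ_nonneg (ver c 0 j)
          have h2 := colZ_le_one (ver c (Fin.last M) j)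
          linarith
      _ = N := by simp
  have hH : -∑ i : Fin M, ∑ j : Fin N, (colZ (hor c i j.succ) - colZ (hor c i j.castSucc)) ≤ M := by
    rw [← Finset.sum_neg_distrib]
    calc _ ≤ ∑ _i : Fin M, (1 : ℤ) := Finset.sum_le_sum fun i _ => by
          have := sum_fin_telescope (fun j : Fin (N + 1) => colZ (hor c i j))
          have h1 := colZ_nonneg (hor c i (Fin.last N))
          have h2 := colZ_le_one (hor c i 0)
          linarith
      _ = M := by simp
  have s1 := Finset.sum_le_sum fun (i : Fin M) (_ : i ∈ Finset.univ) =>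
    Finset.sum_le_sum fun (j : Fin N) (_ : j ∈ Finset.univ) => (key i j).1
  have s2 := Finset.sum_le_sum fun (i : Fin M) (_ : i ∈ Finset.univ) =>
    Finset.sum_le_sum fun (j : Fin N) (_ : j ∈ Finset.univ) => (key i j).2
  simp only [Finset.sum_sub_distrib, ← Finset.mul_sum] at s1 s2 hV hH
  have := card_changes c
  zify
  linarith

/-- A colouring is determined by the colours on the bottom and left sides of the lattice together
with the places where the colour changes. -/
lemma changes_injective : Function.Injective
    (fun c : Coloring (M + 1) (N + 1) =>
      (((fun i => hor c i 0, fun j => ver c 0 j) : (Fin M → Col) × (Fin N → Col)),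
        changes c)) := by
  -- Only two colours exist, so a colour and the presence of a change determine the next colour.
  have step : ∀ a b a' b' : Col, a = a' → (a ≠ b ↔ a' ≠ b') → b = b' := by decide
  intro c c' h
  simp only [Prod.mk.injEq] at h
  obtain ⟨⟨h1, h2⟩, h3⟩ := h
  have h1' : ∀ i, hor c i 0 = hor c' i 0 := fun i => congrFun h1 i
  have h2' : ∀ j, ver c 0 j = ver c' 0 j := fun j => congrFun h2 j
  have hl : ∀ (i : Fin M) (j : Fin N), (hor c i j.castSucc ≠ hor c i j.succ ↔
      hor c' i j.castSucc ≠ hor c' i j.succ) := fun i j => by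
    have := Finset.ext_iff.1 h3 (Sum.inl (i, j))
    simpa only [changes, Finset.mem_filter, Finset.mem_univ, true_and, Finset.inl_mem_disjSum,
      Finset.inr_mem_disjSum] using this
  have hr : ∀ (i : Fin M) (j : Fin N), (ver c i.castSucc j ≠ ver c i.succ j ↔
      ver c' i.castSucc j ≠ ver c' i.succ j) := fun i j => by
    have := Finset.ext_iff.1 h3 (Sum.inr (i, j))
    simpa only [changes, Finset.mem_filter, Finset.mem_univ, true_and, Finset.inl_mem_disjSum,
      Finset.inr_mem_disjSum] using this
  refine Prod.ext (funext fun p => ?_) (funext fun p => ?_)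
  · obtain ⟨i, j⟩ := p
    exact Fin.induction (motive := fun j => hor c i j = hor c' i j) (h1' i)
      (fun j ih => step _ _ _ _ ih (hl i j)) j
  · obtain ⟨i, j⟩ := p
    exact Fin.induction (motive := fun i => ver c i j = ver c' i j) (h2' j)
      (fun i ih => step _ _ _ _ ih (hr i j)) i

/-- Exponential-weight bound on the number of small subsets of a finite type. -/
lemma card_small_mul_pow_le {α : Type*} [Fintype α] [DecidableEq α] (s : ℕ) {x : ℝ}
    (hx : 0 < x) (hx1 : x ≤ 1) :
    (Fintype.card {S : Finset α // S.card ≤ s} : ℝ) * x ^ s ≤ (1 + x) ^ Fintype.card α := by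
  rw [Fintype.card_subtype]
  calc _ = ∑ S : Finset α with S.card ≤ s, x ^ s := by simp
    _ ≤ ∑ S : Finset α with S.card ≤ s, x ^ S.card := Finset.sum_le_sum fun S hS =>
        pow_le_pow_of_le_one hx.le hx1 (Finset.mem_filter.1 hS).2
    _ ≤ ∑ S : Finset α, x ^ S.card :=
        Finset.sum_le_sum_of_subset_of_nonneg (Finset.filter_subset _ _)
          fun _ _ _ => by positivity
    _ = (1 + x) ^ Fintype.card α := by
        have := Fintype.sum_pow_mul_eq_add_pow α x 1
        simpa [add_comm] using this

lemma Gamma_mul_pow_le (B : Finset WTile)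
    (hB : ∀ T ∈ B, T ≠ (((0 : Col), (0 : Col), (1 : Col), (1 : Col)) : WTile) →
      (T.b, T.t) ∈ ({((0 : Col), (0 : Col)), (1, 0), (1, 1)} : Set (Col × Col)) ∧
      (T.r, T.l) ∈ ({((0 : Col), (0 : Col)), (1, 0), (1, 1)} : Set (Col × Col)))
    (M N : ℕ) {x : ℝ} (hx : 0 < x) (hx1 : x ≤ 1) :
    (Gamma B (M + 1) (N + 1) : ℝ) * x ^ (3 * N + M) ≤ 2 ^ (M + N) * (1 + x) ^ (2 * (M * N)) := by
  let F : {c : Coloring (M + 1) (N + 1) // Admissible B c} →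
      ((Fin M → Col) × (Fin N → Col)) × {S : Finset (Place M N) // S.card ≤ 3 * N + M} :=
    fun c => ((fun i => hor c.1 i 0, fun j => ver c.1 0 j),
      ⟨changes c.1, card_changes_le B hB c.1 c.2⟩)
  have hF : Function.Injective F := by
    intro c c' h
    simp only [F, Prod.mk.injEq, Subtype.mk.injEq] at h
    exact Subtype.ext (changes_injective (Prod.ext (Prod.ext h.1.1 h.1.2) h.2))
  have h1 := Nat.card_le_card_of_injective F hF
  rw [Nat.card_eq_fintype_card (α := _ × _), Fintype.card_prod, Fintype.card_prod] at h1
  simp only [Fintype.card_fun, Fintype.card_fin, ← pow_add] at h1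
  have h2 := card_small_mul_pow_le (α := Place M N) (3 * N + M) hx hx1
  have h3 : Fintype.card (Place M N) = 2 * (M * N) := by simp [two_mul]
  rw [h3] at h2
  have h1' : (Gamma B (M + 1) (N + 1) : ℝ) ≤
      2 ^ (M + N) * (Fintype.card {S : Finset (Place M N) // S.card ≤ 3 * N + M} : ℝ) := by
    exact_mod_cast h1
  calc _ ≤ 2 ^ (M + N) * (Fintype.card {S : Finset (Place M N) // S.card ≤ 3 * N + M} : ℝ)
        * x ^ (3 * N + M) := by gcongr
    _ ≤ _ := by rw [mul_assoc]; gcongr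

lemma log_Gamma_le (B : Finset WTile)
    (hB : ∀ T ∈ B, T ≠ (((0 : Col), (0 : Col), (1 : Col), (1 : Col)) : WTile) →
      (T.b, T.t) ∈ ({((0 : Col), (0 : Col)), (1, 0), (1, 1)} : Set (Col × Col)) ∧
      (T.r, T.l) ∈ ({((0 : Col), (0 : Col)), (1, 0), (1, 1)} : Set (Col × Col)))
    (M N : ℕ) {x : ℝ} (hx : 0 < x) (hx1 : x ≤ 1) :
    Real.log (Gamma B (M + 1) (N + 1)) ≤
      (M + N) * Real.log 2 + (3 * N + M) * (-Real.log x) + 2 * (M * N) * x := by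
  have hl2 : 0 ≤ Real.log 2 := Real.log_nonneg (by norm_num)
  have hlx : 0 ≤ -Real.log x := neg_nonneg.2 (Real.log_nonpos hx.le hx1)
  rcases Nat.eq_zero_or_pos (Gamma B (M + 1) (N + 1)) with h0 | hpos
  · rw [h0]; simp only [Nat.cast_zero, Real.log_zero]; positivity
  have hpos' : (0 : ℝ) < Gamma B (M + 1) (N + 1) := by exact_mod_cast hpos
  have h := Real.log_le_log (by positivity) (Gamma_mul_pow_le B hB M N hx hx1)
  rw [Real.log_mul (by positivity) (by positivity), Real.log_mul (by positivity) (by positivity),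
    Real.log_pow, Real.log_pow, Real.log_pow] at h
  push_cast at h
  have h1 : Real.log (1 + x) ≤ x := by
    have := Real.log_le_sub_one_of_pos (show 0 < 1 + x by linarith)
    linarith
  have h2 : 2 * ((M : ℝ) * N) * Real.log (1 + x) ≤ 2 * (M * N) * x := by gcongr
  linarith

lemma log_Gamma_div_le (B : Finset WTile)
    (hB : ∀ T ∈ B, T ≠ (((0 : Col), (0 : Col), (1 : Col), (1 : Col)) : WTile) →
      (T.b, T.t) ∈ ({((0 : Col), (0 : Col)), (1, 0), (1, 1)} : Set (Col × Col)) ∧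
      (T.r, T.l) ∈ ({((0 : Col), (0 : Col)), (1, 0), (1, 1)} : Set (Col × Col)))
    (m n : ℕ) (hm : 1 ≤ m) (hn : 1 ≤ n) {x : ℝ} (hx : 0 < x) (hx1 : x ≤ 1) :
    Real.log (Gamma B m n) / (m * n) ≤
      (Real.log 2 - 3 * Real.log x) * ((m : ℝ)⁻¹ + (n : ℝ)⁻¹) + 2 * x := by
  obtain ⟨M, rfl⟩ := Nat.exists_eq_add_of_le' hm
  obtain ⟨N, rfl⟩ := Nat.exists_eq_add_of_le' hn
  have hl2 : 0 ≤ Real.log 2 := Real.log_nonneg (by norm_num)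
  have hlx : 0 ≤ -Real.log x := neg_nonneg.2 (Real.log_nonpos hx.le hx1)
  have h := log_Gamma_le B hB M N hx hx1
  have hM : (0 : ℝ) ≤ M := by positivity
  have hN : (0 : ℝ) ≤ N := by positivity
  have e : ((Real.log 2 - 3 * Real.log x) * (((M + 1 : ℕ) : ℝ)⁻¹ + ((N + 1 : ℕ) : ℝ)⁻¹) + 2 * x) *
      (((M + 1 : ℕ) : ℝ) * ((N + 1 : ℕ) : ℝ)) =
      (Real.log 2 - 3 * Real.log x) * (M + N + 2) + 2 * x * ((M + 1) * (N + 1)) := by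
    push_cast
    field_simp
    ring
  rw [div_le_iff₀ (by positivity), e]
  have p1 := mul_nonneg hM hlx
  have p2 : 0 ≤ x * (M + N + 1) := by positivity
  linarith

end Aux

/-- Proposition 4.2: if every tile other than `R = (0,0,1,1)` satisfies
`(b,t), (r,l) ∈ {(0,0),(1,0),(1,1)}`, then the spatial entropy vanishes. -/
theorem entropy_zero_of_R_exceptional (B : Finset WTile)
    (hB : ∀ T ∈ B, T ≠ (((0 : Col), (0 : Col), (1 : Col), (1 : Col)) : WTile) →
      (T.b, T.t) ∈ ({((0 : Col), (0 : Col)), (1, 0), (1, 1)} : Set (Col × Col)) ∧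
      (T.r, T.l) ∈ ({((0 : Col), (0 : Col)), (1, 0), (1, 1)} : Set (Col × Col))) :
    entropy B = 0 := by
  have hlim : Tendsto (fun p : ℕ × ℕ => Real.log (Gamma B p.1 p.2) / (p.1 * p.2))
      (atTop ×ˢ atTop) (nhds 0) := by
    refine tendsto_order.2 ⟨fun a ha => Eventually.of_forall fun p => ?_, fun a ha => ?_⟩
    · exact ha.trans_le (div_nonneg (Real.log_natCast_nonneg _) (by positivity))
    -- Any `x` with `2 * x < a` works, as the rest of the bound tends to `0`.
    set x : ℝ := min 1 (a / 4) with hxdef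
    have hx : 0 < x := lt_min one_pos (by linarith)
    have hx1 : x ≤ 1 := min_le_left _ _
    have hxa : x ≤ a / 4 := min_le_right _ _
    have ht : Tendsto (fun p : ℕ × ℕ => (Real.log 2 - 3 * Real.log x) *
        ((p.1 : ℝ)⁻¹ + (p.2 : ℝ)⁻¹) + 2 * x) (atTop ×ˢ atTop) (nhds (2 * x)) := by
      have h0 : Tendsto (fun n : ℕ => (n : ℝ)⁻¹) atTop (nhds 0) :=
        tendsto_inv_atTop_nhds_zero_nat
      have := Tendsto.add_const (2 * x) (((h0.comp (tendsto_fst (f := (atTop : Filter ℕ)) (g := (atTop : Filter ℕ)))).add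
        (h0.comp (tendsto_snd (g := (atTop : Filter ℕ)) (f := (atTop : Filter ℕ))))).const_mul
          (Real.log 2 - 3 * Real.log x))
      simpa using this
    have hev := ht.eventually_lt_const (show 2 * x < a by linarith)
    filter_upwards [hev, (eventually_ge_atTop 1).prod_mk (eventually_ge_atTop 1)] with p hp hp1
    exact (log_Gamma_div_le B hB p.1 p.2 hp1.1 hp1.2 hx hx1).trans_lt hp
  exact hlim.limsup_eq
end

section
/- Let B ⊂ {0,1}^4 be a set of Wang tiles with two symbols, and for m ≥ 1 let S_{m;1} and S_{m;4} be the 2^m × 2^m horizontal connecting operators of B. Then for any k ≥ 1 and any β₁,…,β_k ∈ {1,4}, the spatial entropy satisfies h(B) ≥ (1/(mk))·log ρ(S_{m;β₁} S_{m;β₂} ⋯ S_{m;β_k}), where ρ is the spectral radius. -/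
/-! The `(x, y)` entry of `(S_{m;β₁} ⋯ S_{m;β_k})^s` counts the admissible colorings of a block of
`m × sk` squares with prescribed bottom and top rows, whose left and right sides are both colored
by the `s`-fold repetition of `β`.  As the two sides of all these blocks carry the same colors, any
`t` of them can be placed side by side, which gives
`Γ_{(tm+1) × (sk+1)} ≥ |(S_{m;β₁} ⋯ S_{m;β_k})^s|^t`, with `|A|` the sum of the entries
(`pow_sum_le_Gamma`).

For a nonnegative matrix `|A^s|` dominates the `ℓ^∞` operator norm of `A^s`, hence `ρ(A)^s`, so only
the elementary inequality `ρ(A)^s ≤ ‖A^s‖` is used in place of the Perron–Frobenius theorem.  Taking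
`t = s = n` gives `log Γ / ((nm+1)(nk+1)) ≥ n² log ρ / ((nm+1)(nk+1))`, and the right-hand side tends
to `log ρ / (mk)`.  The degenerate case `log ρ ≤ 0` (including `ρ = 0`, where `Real.log 0 = 0`) follows
from `0 ≤ h(B)`. -/


open Filter

/-- The horizontal connecting operator `S_{m;α}` of `B` for `α ∈ {1,4}`, coded by the
common color `a` of the left and right boundary vertical edges (`α = 1 ↔ a = 0`,
`α = 4 ↔ a = 1`).  Its `(k,l)` entry counts the `B`-admissible colorings of a
horizontal strip of `m` unit squares whose bottom horizontal edges are colored by `k`,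
top horizontal edges by `l`, and whose leftmost and rightmost vertical edges are both
colored `a` (horizontal periodicity with period `m`). -/
noncomputable def connOp (B : Finset WTile) (m : ℕ) (a : Col) :
    Matrix (Fin m → Col) (Fin m → Col) ℝ := fun k l =>
  (Nat.card {v : Fin (m + 1) → Col //
    v 0 = a ∧ v (Fin.last m) = a ∧
    ∀ i : Fin m, ((k i, v i.castSucc, l i, v i.succ) : WTile) ∈ B} : ℝ)


/-! ### Matrix products as counts of blocks -/

/-- Colorings of a block of `m` by `N` squares: the rows `h 0, …, h N` of horizontal edges, and the
rows `v 0, …, v (N-1)` of vertical edges, such that every square carries a tile of `B` and both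
extreme vertical edges of the `j`-th row have color `γ j`. -/
abbrev Block (B : Finset WTile) (m N : ℕ) (γ : Fin N → Col) : Type :=
  {p : (Fin (N + 1) → Fin m → Col) × (Fin N → Fin (m + 1) → Col) //
    ∀ j, p.2 j 0 = γ j ∧ p.2 j (Fin.last m) = γ j ∧
      ∀ i : Fin m, ((p.1 j.castSucc i, p.2 j i.castSucc, p.1 j.succ i, p.2 j i.succ) : WTile) ∈ B}

/-- Expansion of a matrix product as a sum over paths `h 0, …, h N`, tested against a weight `f` on
the starting point, which is what makes the induction go through. -/
lemma sum_mul_list_prod_mulVec {X : Type*} [Fintype X] [DecidableEq X] :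
    ∀ (N : ℕ) (A : Fin N → Matrix X X ℝ) (f : X → ℝ),
      ∑ x, f x * ((List.ofFn A).prod.mulVec 1) x =
        ∑ h : Fin (N + 1) → X, f (h 0) * ∏ j : Fin N, A j (h j.castSucc) (h j.succ)
  | 0, A, f => by
    rw [← (Equiv.funUnique (Fin 1) X).symm.sum_comp]
    simp
  | N + 1, A, f => by
    have ih := sum_mul_list_prod_mulVec N (fun j => A j.succ) (fun y => ∑ x, f x * A 0 x y)
    rw [List.ofFn_succ, List.prod_cons, ← Matrix.mulVec_mulVec]
    rw [← (Fin.consEquiv (fun _ : Fin (N + 2) => X)).sum_comp, Fintype.sum_prod_type]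
    calc _ = ∑ y, (∑ x, f x * A 0 x y) *
          ((List.ofFn fun j : Fin N => A j.succ).prod.mulVec 1) y := by
          simp only [Matrix.mulVec, dotProduct, Finset.mul_sum, Finset.sum_mul]
          rw [Finset.sum_comm]
          refine Finset.sum_congr rfl fun y _ => ?_
          rw [Finset.sum_comm]
          refine Finset.sum_congr rfl fun x _ => Finset.sum_congr rfl fun z _ => ?_
          ring
      _ = _ := by
          rw [ih, Finset.sum_comm]
          refine Finset.sum_congr rfl fun h _ => ?_
          rw [Finset.sum_mul]
          refine Finset.sum_congr rfl fun x _ => ?_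
          simp only [Fin.consEquiv, Equiv.coe_fn_mk, Fin.prod_univ_succ, Fin.cons_zero,
            Fin.castSucc_zero, Fin.cons_succ, ← Fin.succ_castSucc, mul_assoc]

lemma sum_list_prod_connOp (B : Finset WTile) (m N : ℕ) (γ : Fin N → Col) :
    ∑ x, ∑ y, (List.ofFn fun j => connOp B m (γ j)).prod x y = (Nat.card (Block B m N γ) : ℝ) := by
  have h := sum_mul_list_prod_mulVec N (fun j => connOp B m (γ j)) 1
  simp only [Pi.one_apply, one_mul, Matrix.mulVec, dotProduct, mul_one] at h
  rw [h]
  rw [Nat.card_congr (Equiv.subtypeProdEquivSigmaSubtype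
    (fun (a : Fin (N + 1) → Fin m → Col) (b : Fin N → Fin (m + 1) → Col) =>
      ∀ j, b j 0 = γ j ∧ b j (Fin.last m) = γ j ∧
      ∀ i : Fin m, ((a j.castSucc i, b j i.castSucc, a j.succ i, b j i.succ) : WTile) ∈ B)),
    Nat.card_sigma, Nat.cast_sum]
  refine Finset.sum_congr rfl fun a _ => ?_
  rw [Nat.card_congr (Equiv.subtypePiEquivPi (p := fun (j : Fin N) (b : Fin (m + 1) → Col) =>
      b 0 = γ j ∧ b (Fin.last m) = γ j ∧
      ∀ i : Fin m, ((a j.castSucc i, b i.castSucc, a j.succ i, b i.succ) : WTile) ∈ B)),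
    Nat.card_pi, Nat.cast_prod]
  rfl

/-! ### Placing blocks side by side -/

lemma div_mod_block {m q r : ℕ} (hr : r < m) : (q * m + r) / m = q ∧ (q * m + r) % m = r := by
  have hm : 0 < m := by omega
  constructor
  · rw [mul_comm, Nat.mul_add_div hm, Nat.div_eq_of_lt hr, add_zero]
  · rw [mul_comm, Nat.mul_add_mod, Nat.mod_eq_of_lt hr]

/-- The `t` blocks `w 0, …, w (t-1)` placed side by side.  The vertical edges at abscissa `t * m`, the
right side of the last block, are colored by `γ`. -/
def glue {B : Finset WTile} {m N t : ℕ} (hm : 0 < m) {γ : Fin N → Col}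
    (w : Fin t → Block B m N γ) : Coloring (t * m + 1) (N + 1) :=
  (fun p => (w ⟨p.1 / m, (Nat.div_lt_iff_lt_mul hm).2 p.1.2⟩).1.1 p.2
      ⟨p.1 % m, Nat.mod_lt _ hm⟩,
   fun p => if h : p.1.1 < t * m then
      (w ⟨p.1 / m, (Nat.div_lt_iff_lt_mul hm).2 h⟩).1.2 p.2
        ⟨p.1 % m, (Nat.mod_lt _ hm).trans (Nat.lt_succ_self m)⟩
    else γ p.2)

lemma block_lt {m t r : ℕ} (q : Fin t) (hr : r < m) : q.1 * m + r < t * m := by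
  have : (q.1 + 1) * m ≤ t * m := Nat.mul_le_mul_right m q.2
  rw [add_mul, one_mul] at this
  omega

lemma glue_fst {B : Finset WTile} {m N t : ℕ} (hm : 0 < m) {γ : Fin N → Col}
    (w : Fin t → Block B m N γ) (q : Fin t) (r : Fin m) (j : Fin (N + 1)) (i : Fin (t * m))
    (hi : i.1 = q.1 * m + r.1) :
    (glue hm w).1 (i, j) = (w q).1.1 j r := by
  obtain ⟨h1, h2⟩ := div_mod_block (q := q.1) r.2
  simp only [glue, hi, h1, h2]

/-- The case `r = m`, where the edge lies on the common side of two adjacent blocks (or on the right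
end), is where the equality of the side colors of all blocks enters. -/
lemma glue_snd {B : Finset WTile} {m N t : ℕ} (hm : 0 < m) {γ : Fin N → Col}
    (w : Fin t → Block B m N γ) (q : Fin t) (r : Fin (m + 1)) (j : Fin N) (i : Fin (t * m + 1))
    (hi : i.1 = q.1 * m + r.1) :
    (glue hm w).2 (i, j) = (w q).1.2 j r := by
  rcases Nat.lt_succ_iff_lt_or_eq.1 r.2 with hr | hr
  · obtain ⟨h1, h2⟩ := div_mod_block (q := q.1) hr
    have h3 := block_lt q hr
    simp only [glue, hi, h1, h2, dif_pos h3]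
  · have hl : r = Fin.last m := Fin.ext hr
    have hi' : i.1 = (q.1 + 1) * m + 0 := by rw [hi, hr]; ring
    obtain ⟨h1, h2⟩ := div_mod_block (q := q.1 + 1) hm
    rw [hl, ((w q).2 j).2.1]
    by_cases h : i.1 < t * m
    · simp only [glue, dif_pos h]
      simp only [hi', h1, h2]
      exact ((w _).2 j).1
    · simp only [glue, dif_neg h]

lemma glue_admissible {B : Finset WTile} {m N t : ℕ} (hm : 0 < m) {γ : Fin N → Col}
    (w : Fin t → Block B m N γ) : Admissible B (glue hm w) := by
  intro i j
  have hlt : i.1 < t * m := i.2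
  let q : Fin t := ⟨i.1 / m, (Nat.div_lt_iff_lt_mul hm).2 hlt⟩
  let r : Fin m := ⟨i.1 % m, Nat.mod_lt _ hm⟩
  have hi : i.1 = q.1 * m + r.1 := (Nat.div_add_mod' i.1 m).symm
  have key := ((w q).2 j).2.2 r
  have e1 := glue_fst hm w q r (Fin.castSucc j) i hi
  have e2 := glue_snd hm w q r.castSucc j ⟨i.1, by omega⟩ hi
  have e3 := glue_fst hm w q r (Fin.succ j) i hi
  have e4 := glue_snd hm w q r.succ j ⟨i.1 + 1, by omega⟩
    (by simp only [Fin.val_succ]; omega)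
  rw [← e1, ← e2, ← e3, ← e4] at key
  exact key

lemma glue_injective {B : Finset WTile} {m N t : ℕ} (hm : 0 < m) {γ : Fin N → Col} :
    Function.Injective (glue (B := B) (t := t) hm (γ := γ)) := by
  intro w w' h
  funext q
  refine Subtype.ext (Prod.ext ?_ ?_)
  · funext j r
    have hlt := block_lt q r.2
    rw [← glue_fst hm w q r j ⟨_, hlt⟩ rfl, ← glue_fst hm w' q r j ⟨_, hlt⟩ rfl, h]
  · funext j r
    have hlt : q.1 * m + r.1 < t * m + 1 := by
      have : (q.1 + 1) * m ≤ t * m := Nat.mul_le_mul_right m q.2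
      rw [add_mul, one_mul] at this
      omega
    rw [← glue_snd hm w q r j ⟨_, hlt⟩ rfl, ← glue_snd hm w' q r j ⟨_, hlt⟩ rfl, h]

instance (m n : ℕ) : Finite (Coloring m n) := by unfold Coloring; infer_instance

lemma card_block_pow_le_Gamma (B : Finset WTile) {m : ℕ} (hm : 0 < m) (N t : ℕ)
    (γ : Fin N → Col) :
    Nat.card (Block B m N γ) ^ t ≤ Gamma B (t * m + 1) (N + 1) := by
  have h := Nat.card_le_card_of_injective
    (fun w : Fin t → Block B m N γ =>
      (⟨glue hm w, glue_admissible hm w⟩ : {c : Coloring (t * m + 1) (N + 1) // Admissible B c}))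
    (fun w w' e => glue_injective hm (congrArg Subtype.val e))
  rwa [Nat.card_fun, Nat.card_eq_fintype_card (α := Fin t), Fintype.card_fin] at h

lemma list_prod_pow {M : Type*} [Monoid M] {k : ℕ} (s : ℕ) (A : Fin k → M) :
    (List.ofFn A).prod ^ s = (List.ofFn fun j : Fin (s * k) => A j.modNat).prod := by
  have e : ∀ (i : Fin s) (j : Fin k) (h : i.1 * k + j.1 < s * k),
      (⟨i.1 * k + j.1, h⟩ : Fin (s * k)).modNat = j := fun i j h =>
    Fin.ext (div_mod_block (q := i.1) j.2).2
  rw [List.ofFn_mul]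
  simp only [e]
  simp [List.prod_flatten]

/-- `|(S_{m;β₁} ⋯ S_{m;β_k})^s|^t ≤ Γ_{(tm+1) × (sk+1)}`. -/
lemma pow_sum_le_Gamma (B : Finset WTile) {m k : ℕ} (hm : 0 < m) (β : Fin k → Col) (s t : ℕ) :
    (∑ x, ∑ y, ((List.ofFn fun i => connOp B m (β i)).prod ^ s) x y) ^ t ≤
      (Gamma B (t * m + 1) (s * k + 1) : ℝ) := by
  rw [list_prod_pow, sum_list_prod_connOp B m (s * k) (fun j => β j.modNat)]
  exact_mod_cast card_block_pow_le_Gamma B hm (s * k) t _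

/-! ### Spectral radius of a nonnegative matrix -/

lemma list_prod_connOp_nonneg (B : Finset WTile) {m k : ℕ} (β : Fin k → Col) (s : ℕ)
    (x y : Fin m → Col) : 0 ≤ ((List.ofFn fun i => connOp B m (β i)).prod ^ s) x y := by
  have hmul : ∀ P Q : Matrix (Fin m → Col) (Fin m → Col) ℝ, (∀ x y, 0 ≤ P x y) →
      (∀ x y, 0 ≤ Q x y) → ∀ x y, 0 ≤ (P * Q) x y := fun P Q hP hQ x y =>
    Finset.sum_nonneg fun z _ => mul_nonneg (hP x z) (hQ z y)
  have hone : ∀ x y, 0 ≤ (1 : Matrix (Fin m → Col) (Fin m → Col) ℝ) x y := fun x y => by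
    rw [Matrix.one_apply]; split_ifs <;> norm_num
  have hlist : ∀ l : List (Matrix (Fin m → Col) (Fin m → Col) ℝ),
      (∀ P ∈ l, ∀ x y, 0 ≤ P x y) → ∀ x y, 0 ≤ l.prod x y := by
    intro l
    induction l with
    | nil => intro _; simpa using hone
    | cons P l ih =>
      intro h
      rw [List.prod_cons]
      exact hmul _ _ (h P (by simp)) (ih fun Q hQ => h Q (by simp [hQ]))
  rw [list_prod_pow]
  refine hlist _ ?_ x y
  intro P hP
  obtain ⟨j, rfl⟩ := (List.mem_ofFn' _ _).1 hP
  exact fun _ _ => Nat.cast_nonneg _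

section
attribute [local instance] Matrix.linftyOpNormedRing Matrix.linftyOpNormedAlgebra

/-- The sum of the entries of a nonnegative matrix dominates its `ℓ^∞` operator norm, hence its
spectral radius. -/
lemma spectralRadius_pow_le_sum {X : Type*} [Fintype X] [DecidableEq X] [Nonempty X]
    (A : Matrix X X ℝ) (s : ℕ) (hs : s ≠ 0) (hA : ∀ x y, 0 ≤ (A ^ s) x y) :
    (spectralRadius ℂ (A.map Complex.ofReal)).toReal ^ s ≤ ∑ x, ∑ y, (A ^ s) x y := by
  have : NormOneClass (Matrix X X ℂ) := Matrix.linfty_opNormOneClass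
  have h1 : spectralRadius ℂ (A.map Complex.ofReal) ^ s ≤
      (‖(A.map Complex.ofReal) ^ s‖₊ : ENNReal) :=
    (spectrum.spectralRadius_pow_le _ s hs).trans (spectrum.spectralRadius_le_nnnorm _)
  have h2 : (A.map Complex.ofReal) ^ s = (A ^ s).map Complex.ofReal :=
    (Matrix.map_pow A Complex.ofRealHom s).symm
  have h3 := ENNReal.toReal_mono ENNReal.coe_ne_top h1
  rw [ENNReal.toReal_pow, ENNReal.coe_toReal, h2] at h3
  refine h3.trans ?_
  have h4 : ‖(A ^ s).map Complex.ofReal‖₊ ≤ ∑ x, ∑ y, ‖((A ^ s) x y : ℂ)‖₊ := by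
    rw [Matrix.linfty_opNNNorm_def]
    refine Finset.sup_le fun x _ => ?_
    exact Finset.single_le_sum (f := fun x => ∑ y, ‖((A ^ s) x y : ℂ)‖₊)
      (fun _ _ => zero_le) (Finset.mem_univ x)
  refine (NNReal.coe_le_coe.2 h4).trans (le_of_eq ?_)
  push_cast
  refine Finset.sum_congr rfl fun x _ => Finset.sum_congr rfl fun y _ => ?_
  rw [Complex.norm_real, Real.norm_of_nonneg (hA x y)]

end

/-! ### Entropy along a sequence of sizes -/

lemma log_Gamma_div_nonneg (B : Finset WTile) (p : ℕ × ℕ) :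
    0 ≤ Real.log (Gamma B p.1 p.2) / (p.1 * p.2) :=
  div_nonneg (Real.log_natCast_nonneg _) (by positivity)

lemma log_Gamma_div_le_s8 (B : Finset WTile) (p : ℕ × ℕ) :
    Real.log (Gamma B p.1 p.2) / (p.1 * p.2) ≤ 2 * Real.log 2 := by
  obtain ⟨m, n⟩ := p
  have h2 : 0 ≤ Real.log 2 := Real.log_nonneg (by norm_num)
  have hG : Gamma B m n ≤ 2 ^ (2 * (m * n)) := by
    calc Gamma B m n ≤ Nat.card (Coloring m n) :=
          Nat.card_le_card_of_injective _ Subtype.val_injective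
      _ = 2 ^ ((m - 1) * n + m * (n - 1)) := by
          unfold Coloring
          simp [pow_add]
      _ ≤ 2 ^ (2 * (m * n)) := by
          refine Nat.pow_le_pow_right (by norm_num) ?_
          have := Nat.mul_le_mul_right n (Nat.sub_le m 1)
          have := Nat.mul_le_mul_left m (Nat.sub_le n 1)
          omega
  have hlog : Real.log (Gamma B m n) ≤ 2 * Real.log 2 * (m * n) := by
    rcases Nat.eq_zero_or_pos (Gamma B m n) with h0 | h0
    · rw [h0]; simp only [Nat.cast_zero, Real.log_zero]; positivity
    · calc Real.log (Gamma B m n) ≤ Real.log ((2 : ℝ) ^ (2 * (m * n))) :=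
            Real.log_le_log (by exact_mod_cast h0) (by exact_mod_cast hG)
        _ = _ := by rw [Real.log_pow]; push_cast; ring
  exact div_le_of_le_mul₀ (by positivity) (by positivity) hlog

/-- Lower bounds for `h(B)` along the sizes `(nm+1) × (nk+1)`. -/
lemma le_entropy (B : Finset WTile) {m k : ℕ} (hm : 1 ≤ m) (hk : 1 ≤ k) {v : ℕ → ℝ} {L : ℝ}
    (hv : Tendsto v atTop (nhds L))
    (hle : ∀ᶠ n in atTop, v n ≤ Real.log (Gamma B (n * m + 1) (n * k + 1)) /
      (((n * m + 1 : ℕ) : ℝ) * ((n * k + 1 : ℕ) : ℝ))) :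
    L ≤ entropy B := by
  by_contra! hlt
  obtain ⟨c, hc1, hc2⟩ := exists_between hlt
  have hbdd : IsBoundedUnder (· ≤ ·) (atTop ×ˢ atTop)
      (fun p : ℕ × ℕ => Real.log (Gamma B p.1 p.2) / (p.1 * p.2)) :=
    isBoundedUnder_of ⟨_, log_Gamma_div_le_s8 B⟩
  have hev := eventually_lt_of_limsup_lt hc1 hbdd
  have hφ : ∀ a : ℕ, 1 ≤ a → Tendsto (fun n : ℕ => n * a + 1) atTop atTop := fun a ha =>
    tendsto_atTop_mono (fun n => (Nat.le_mul_of_pos_right n ha).trans (Nat.le_succ _)) tendsto_id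
  have hev' := ((hφ m hm).prodMk (hφ k hk)).eventually hev
  obtain ⟨n, h1, h2, h3⟩ := (hev'.and (hle.and (hv.eventually (lt_mem_nhds hc2)))).exists
  exact absurd (h3.trans_le h2) (not_lt.2 h1.le)

/-- Theorem 3.1: lower bound of the spatial entropy via connecting operators:
`h(B) ≥ (1/(mk)) log ρ(S_{m;β₁} ⋯ S_{m;β_k})` for any `β₁,…,β_k ∈ {1,4}`. -/
theorem entropy_lower_bound_connOp (B : Finset WTile) (m k : ℕ) (hm : 1 ≤ m)
    (hk : 1 ≤ k) (β : Fin k → Col) :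
    (1 / (m * k) : ℝ) *
        Real.log ((spectralRadius ℂ
          (((List.ofFn fun i => connOp B m (β i)).prod).map Complex.ofReal)).toReal) ≤
      entropy B := by
  set ρ := (spectralRadius ℂ
    (((List.ofFn fun i => connOp B m (β i)).prod).map Complex.ofReal)).toReal with hρ
  have hm' : (0 : ℝ) < m := by exact_mod_cast hm
  have hk' : (0 : ℝ) < k := by exact_mod_cast hk
  rcases le_or_gt (Real.log ρ) 0 with hlog | hlog
  · have h0 : 0 ≤ entropy B := le_entropy B hm hk (v := fun _ => 0) tendsto_const_nhds
      (Eventually.of_forall fun n => log_Gamma_div_nonneg B (n * m + 1, n * k + 1))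
    exact (mul_nonpos_of_nonneg_of_nonpos (by positivity) hlog).trans h0
  have hρ0 : 0 < ρ := by
    refine lt_of_le_of_ne ENNReal.toReal_nonneg fun h => ?_
    rw [← h, Real.log_zero] at hlog
    exact lt_irrefl _ hlog
  refine le_entropy B hm hk
    (v := fun n : ℕ => ((n : ℝ) / (n * m + 1)) * ((n : ℝ) / (n * k + 1)) * Real.log ρ) ?_ ?_
  · have hlim : ∀ a : ℝ, 0 < a →
        Tendsto (fun n : ℕ => (n : ℝ) / (n * a + 1)) atTop (nhds a⁻¹) := by
      intro a ha
      have h1 : Tendsto (fun n : ℕ => (a + (n : ℝ)⁻¹)⁻¹) atTop (nhds (a + 0)⁻¹) :=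
        (tendsto_const_nhds.add tendsto_inv_atTop_nhds_zero_nat).inv₀ (by simpa using ha.ne')
      rw [add_zero] at h1
      refine h1.congr' ?_
      filter_upwards [eventually_gt_atTop 0] with n hn
      have hn' : (0 : ℝ) < n := by exact_mod_cast hn
      have : a + (n : ℝ)⁻¹ = (n * a + 1) / n := by field_simp
      rw [this, inv_div]
    have := ((hlim m hm').mul (hlim k hk')).mul_const (Real.log ρ)
    rwa [show (1 / (m * k) : ℝ) = (m : ℝ)⁻¹ * (k : ℝ)⁻¹ by field_simp]
  · filter_upwards [eventually_gt_atTop 0] with n hn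
    have h1 := spectralRadius_pow_le_sum (List.ofFn fun i => connOp B m (β i)).prod n hn.ne'
      (list_prod_connOp_nonneg B β n)
    rw [← hρ] at h1
    have h2 : (ρ ^ n) ^ n ≤ (Gamma B (n * m + 1) (n * k + 1) : ℝ) :=
      (pow_le_pow_left₀ (by positivity) h1 n).trans (pow_sum_le_Gamma B hm β n n)
    have h3 := Real.log_le_log (by positivity) h2
    rw [Real.log_pow, Real.log_pow] at h3
    push_cast
    calc (n : ℝ) / (n * m + 1) * (n / (n * k + 1)) * Real.log ρ
        = n * (n * Real.log ρ) / ((n * m + 1) * (n * k + 1)) := by field_simp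
      _ ≤ _ := by gcongr
end
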